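/- The permutation ρ defined by ρ(i,j) = (2−i, j) if i ≡ 1 (mod n) and ρ(i,j) = (2−i, 1−j) otherwise is an involutory automorphism of Γ that belongs to the subgroup G = ⟨σ₁, σ₂⟩, fixes the vertex (1,1), and satisfies ρσ₁ρ = σ₁⁻¹ and ρσ₂ρ = σ₂⁻¹. -/

import Mathlib

/-- The lexicographic product `C_n[mK_1]`: vertices `(i,j)` with `(i₁,j₁) ~ (i₂,j₂)`
iff `i₂ = i₁ + 1` or `i₁ = i₂ + 1` (indices modulo `n`). -/
def lexCycle (n m : ℕ) : SimpleGraph (ZMod n × ZMod m) :=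
  SimpleGraph.fromRel (fun u v => v.1 = u.1 + 1)

/-- The representative in `{1, …, n}` of `i` modulo `n`. -/
def zrep {n : ℕ} (i : ZMod n) : ℕ := if i.val = 0 then n else i.val

/-!
The identity `ρ * σᵢ * ρ = σᵢ⁻¹` says that `ρ * σᵢ` is an involution. Indeed `ρ * σ₁` is the point
reflection `v ↦ 1 - v`, and `ρ * σ₂` reflects every fibre of `(i, j) ↦ i` in itself.

For `ρ ∈ ⟨σ₁, σ₂⟩` it suffices to reach `ρ * σ₂`, which is `σ₁ ^ n`, the map `(i, j) ↦ (i, 1 - j)`,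
times the fibrewise translation `τ` by the offset occurring in `σ₂`. Now `σ₂ ^ 2` and its conjugate
by `σ₁` are fibrewise translations whose quotient is `τ ^ 4`, and the order of `τ` is odd.
-/

open Equiv (Perm)

section Groups

variable {G : Type*} [Group G]

theorem mul_mul_eq_inv_of_mul_self_eq_one {a b : G} (hab : a * b * (a * b) = 1) :
    a * b * a = b⁻¹ := by
  rw [eq_inv_iff_mul_eq_one, mul_assoc, hab]

theorem mem_of_pow_mem_of_coprime {H : Subgroup G} {g : G} {k l : ℕ} (hkl : k.Coprime l)
    (hk : g ^ k ∈ H) (hl : g ^ l ∈ H) : g ∈ H := by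
  have bezout : (k * k.gcdA l + l * k.gcdB l : ℤ) = 1 := by
    rw [← Nat.gcd_eq_gcd_ab, hkl.gcd_eq_one, Nat.cast_one]
  rw [← zpow_one g, ← bezout, zpow_add, zpow_mul, zpow_mul, zpow_natCast, zpow_natCast]
  exact mul_mem (zpow_mem hk _) (zpow_mem hl _)

end Groups

theorem lexCycle_adj_apply_iff {n m : ℕ} {p : Perm (ZMod n × ZMod m)} {c : ZMod n}
    (hp : ∀ u, (p u).1 = c - u.1) (u v : ZMod n × ZMod m) :
    (lexCycle n m).Adj (p u) (p v) ↔ (lexCycle n m).Adj u v := by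
  have reverse (a b : ZMod n) : c - b = c - a + 1 ↔ a = b + 1 := by
    rw [sub_add, sub_right_inj, eq_sub_iff_add_eq, eq_comm]
  simp only [lexCycle, SimpleGraph.fromRel_adj, p.injective.ne_iff, hp, reverse, or_comm]

section FibreMaps

variable {A B : Type*} [AddCommGroup B]

/-- The permutation of `A × B` translating the fibre over `i` by `f i`. -/
def fibreTranslation (f : A → B) : Perm (A × B) :=
  (Equiv.refl A).prodShear fun i => Equiv.addRight (f i)

/-- The permutation of `A × B` reflecting the fibre over `i` by `j ↦ c i - j`. -/
def fibreReflection (c : A → B) : Perm (A × B) :=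
  (Equiv.refl A).prodShear fun i => Equiv.subLeft (c i)

@[simp]
theorem fibreTranslation_apply (f : A → B) (i : A) (j : B) :
    fibreTranslation f (i, j) = (i, j + f i) :=
  rfl

@[simp]
theorem fibreReflection_apply (c : A → B) (i : A) (j : B) :
    fibreReflection c (i, j) = (i, c i - j) :=
  rfl

theorem fibreTranslation_zero : fibreTranslation (0 : A → B) = 1 := by
  ext1 ⟨i, j⟩
  simp

theorem fibreTranslation_add (f g : A → B) :
    fibreTranslation (f + g) = fibreTranslation f * fibreTranslation g := by
  ext1 ⟨i, j⟩
  simp [add_assoc, add_comm (f i)]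

theorem fibreTranslation_nsmul (k : ℕ) (f : A → B) :
    fibreTranslation (k • f) = fibreTranslation f ^ k := by
  induction k with
  | zero => rw [zero_smul, pow_zero, fibreTranslation_zero]
  | succ k ih => rw [succ_nsmul, pow_succ, fibreTranslation_add, ih]

theorem fibreReflection_mul_self (c : A → B) : fibreReflection c * fibreReflection c = 1 := by
  ext1 ⟨i, j⟩
  simp

theorem fibreReflection_mul_fibreTranslation (c f : A → B) :
    fibreReflection c * fibreTranslation f = fibreReflection (c - f) := by
  ext1 ⟨i, j⟩
  simp only [Perm.mul_apply, fibreTranslation_apply, fibreReflection_apply, Pi.sub_apply,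
    sub_sub, add_comm j]

end FibreMaps

section Generators

@[simp]
theorem two_sub_eq_one_iff {A : Type*} [AddCommGroupWithOne A] {i : A} : 2 - i = 1 ↔ i = 1 := by
  rw [sub_eq_iff_eq_add, ← one_add_one_eq_two, add_right_inj, eq_comm]

variable (A B : Type*) [AddCommGroupWithOne A] [DecidableEq A] [AddCommGroupWithOne B]

/-- The paper's `σ₁`: it moves each fibre to the next one, reflecting the fibre over `0` on
the way. -/
def twistedRotation : Perm (A × B) :=
  (Equiv.addRight 1).prodShear fun i => if i = 0 then Equiv.subLeft 1 else Equiv.refl B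

/-- The paper's `ρ`: it reflects the base in `1`, and reflects all fibres but the one over `1`. -/
def twistedReflection : Perm (A × B) :=
  (Equiv.subLeft 2).prodShear fun i => if i = 1 then Equiv.refl B else Equiv.subLeft 1

variable {A B}

/-- The shape of the paper's `σ₂`: it reflects the base in `1`, reflects the fibre over `1` and
translates every other fibre by its offset `f i`. -/
def shearedReflection (f : A → B) : Perm (A × B) :=
  (Equiv.subLeft 2).prodShear fun i => if i = 1 then Equiv.subLeft 2 else Equiv.addRight (f i)

theorem twistedRotation_apply (i : A) (j : B) :
    twistedRotation A B (i, j) = if i = 0 then (i + 1, 1 - j) else (i + 1, j) := by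
  unfold twistedRotation
  split_ifs with h <;> simp [h]

theorem twistedReflection_apply (i : A) (j : B) :
    twistedReflection A B (i, j) = if i = 1 then (2 - i, j) else (2 - i, 1 - j) := by
  unfold twistedReflection
  split_ifs with h <;> simp [h]

theorem shearedReflection_apply (f : A → B) (i : A) (j : B) :
    shearedReflection f (i, j) = if i = 1 then (2 - i, 2 - j) else (2 - i, j + f i) := by
  unfold shearedReflection
  split_ifs with h <;> simp [h]

theorem twistedReflection_mul_self : twistedReflection A B * twistedReflection A B = 1 := by
  ext1 ⟨i, j⟩
  by_cases hi : i = 1 <;> simp [twistedReflection_apply, hi]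

theorem twistedReflection_apply_one (j : B) : twistedReflection A B (1, j) = (1, j) := by
  simp [twistedReflection_apply]

theorem twistedReflection_mul_twistedRotation :
    twistedReflection A B * twistedRotation A B = Equiv.subLeft 1 := by
  ext1 ⟨i, j⟩
  have two_sub_add_one : (2 : A) - (i + 1) = 1 - i := by
    rw [← one_add_one_eq_two, add_sub_add_right_eq_sub]
  by_cases hi : i = 0
  · have two_sub_one : (2 : A) - 1 = 1 := two_sub_eq_one_iff.mpr rfl
    simp [twistedReflection_apply, twistedRotation_apply, hi, Prod.ext_iff, two_sub_one]
  · simp [twistedReflection_apply, twistedRotation_apply, hi, Prod.ext_iff, two_sub_add_one]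

theorem twistedReflection_mul_shearedReflection {f : A → B} (hf : f 1 = -1) :
    twistedReflection A B * shearedReflection f = fibreReflection (1 - f) := by
  ext1 ⟨i, j⟩
  by_cases hi : i = 1 <;> simp [twistedReflection_apply, shearedReflection_apply, hi, hf,
    sub_sub, add_comm j, one_add_one_eq_two]

theorem shearedReflection_sq {f g : A → B} (hg_one : g 1 = 0)
    (hg : ∀ i ≠ 1, g i = f i + f (2 - i)) : shearedReflection f ^ 2 = fibreTranslation g := by
  ext1 ⟨i, j⟩
  by_cases hi : i = 1 <;> simp [pow_two, shearedReflection_apply, hi, hg_one, hg, add_assoc]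

theorem twistedReflection_mul_twistedRotation_mul_twistedReflection :
    twistedReflection A B * twistedRotation A B * twistedReflection A B =
      (twistedRotation A B)⁻¹ := by
  refine mul_mul_eq_inv_of_mul_self_eq_one ?_
  rw [twistedReflection_mul_twistedRotation]
  ext1 v
  simp

theorem twistedReflection_mul_shearedReflection_mul_twistedReflection {f : A → B}
    (hf : f 1 = -1) :
    twistedReflection A B * shearedReflection f * twistedReflection A B =
      (shearedReflection f)⁻¹ := by
  refine mul_mul_eq_inv_of_mul_self_eq_one ?_
  rw [twistedReflection_mul_shearedReflection hf, fibreReflection_mul_self]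

theorem twistedRotation_mul_fibreTranslation {f g : A → B} (hg_one : g 1 = -f 0)
    (hg : ∀ i ≠ 0, g (i + 1) = f i) :
    twistedRotation A B * fibreTranslation f = fibreTranslation g * twistedRotation A B := by
  ext1 ⟨i, j⟩
  by_cases hi : i = 0 <;> simp [twistedRotation_apply, hi, hg_one, hg, sub_add_eq_sub_sub,
    sub_eq_add_neg (1 - j)]

end Generators

section Representatives

variable {n : ℕ}

theorem zrep_zero : zrep (0 : ZMod n) = n := by
  simp [zrep]

variable [NeZero n]

theorem zrep_pos (i : ZMod n) : 0 < zrep i := by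
  unfold zrep
  split_ifs with h
  exacts [NeZero.pos n, Nat.pos_of_ne_zero h]

theorem zrep_le (i : ZMod n) : zrep i ≤ n := by
  unfold zrep
  split_ifs
  exacts [le_rfl, i.val_le]

@[simp]
theorem natCast_zrep (i : ZMod n) : (zrep i : ZMod n) = i := by
  unfold zrep
  split_ifs with h
  · rw [ZMod.natCast_self, (ZMod.val_eq_zero i).mp h]
  · exact ZMod.natCast_zmod_val i

theorem zrep_natCast {k : ℕ} (hk : 0 < k) (hkn : k ≤ n) : zrep (k : ZMod n) = k := by
  unfold zrep
  rcases hkn.eq_or_lt with rfl | hlt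
  · simp
  · rw [ZMod.val_natCast_of_lt hlt, if_neg hk.ne']

theorem zrep_one : zrep (1 : ZMod n) = 1 := by
  exact_mod_cast zrep_natCast (n := n) one_pos NeZero.one_le

theorem zrep_add_one {i : ZMod n} (hi : i ≠ 0) : zrep (i + 1) = zrep i + 1 := by
  have hlt : zrep i < n := (zrep_le i).lt_of_ne fun h => hi <| by
    rw [← natCast_zrep i, h, ZMod.natCast_self]
  simpa using zrep_natCast (zrep i).succ_pos hlt

theorem one_lt_zrep {i : ZMod n} (hi : i ≠ 1) : 1 < zrep i :=
  lt_of_le_of_ne (zrep_pos i) fun h => hi <| by rw [← natCast_zrep i, ← h, Nat.cast_one]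

theorem zrep_two_sub {i : ZMod n} (hi : i ≠ 1) : zrep (2 - i) = n + 2 - zrep i := by
  have hle := zrep_le i
  have hlt := one_lt_zrep hi
  have h := zrep_natCast (n := n) (k := n + 2 - zrep i) (by omega) (by omega)
  rwa [Nat.cast_sub (by omega), Nat.cast_add, ZMod.natCast_self, natCast_zrep, zero_add,
    Nat.cast_ofNat] at h

end Representatives

section RotationPowers

variable {n : ℕ} {B : Type*} [AddCommGroupWithOne B]

theorem twistedRotation_pow_apply_one {k : ℕ} (hk : k < n) (j : B) :
    (twistedRotation (ZMod n) B ^ k) (1, j) = (1 + (k : ZMod n), j) := by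
  induction k with
  | zero => simp
  | succ k ih =>
    have hne : (1 + k : ZMod n) ≠ 0 := by
      rw [add_comm]
      exact_mod_cast (ZMod.natCast_eq_zero_iff (k + 1) n).not.mpr
        (Nat.not_dvd_of_pos_of_lt k.succ_pos hk)
    rw [pow_succ', Perm.mul_apply, ih (by omega), twistedRotation_apply, if_neg hne,
      Nat.cast_succ, add_assoc]

theorem twistedRotation_pow_self [NeZero n] :
    twistedRotation (ZMod n) B ^ n = fibreReflection 1 := by
  have pow_apply_one (j : B) : (twistedRotation (ZMod n) B ^ n) (1, j) = (1, 1 - j) := by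
    have hlast : 1 + ((n - 1 : ℕ) : ZMod n) = 0 := by
      rw [Nat.cast_pred (NeZero.pos n), ZMod.natCast_self, zero_sub, add_neg_cancel]
    rw [← mul_pow_sub_one (NeZero.ne n), Perm.mul_apply,
      twistedRotation_pow_apply_one (Nat.sub_lt (NeZero.pos n) one_pos), hlast,
      twistedRotation_apply, if_pos rfl, zero_add]
  -- The powers of `σ₁` commute and carry the fibre over `1` onto every other fibre.
  ext1 ⟨i, j⟩
  have reach (j : B) : (twistedRotation (ZMod n) B ^ (i - 1).val) (1, j) = (i, j) := by
    rw [twistedRotation_pow_apply_one (ZMod.val_lt _), ZMod.natCast_zmod_val, add_sub_cancel]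
  rw [← reach, ← Perm.mul_apply, ← pow_add, add_comm, pow_add, Perm.mul_apply, pow_apply_one,
    reach, reach, fibreReflection_apply, Pi.one_apply]

end RotationPowers

section Offset

variable {n : ℕ} {R : Type*} [CommRing R]

/-- The sign `(-1)^(ī - 1)` in the paper's formula for `σ₂`, as an element of the ring `R`. -/
def altSign (R : Type*) [CommRing R] {n : ℕ} (i : ZMod n) : R := (-1) ^ (zrep i - 1)

/-- The amount `(-1)^(ī - 1) (2ī - 3)` by which the paper's `σ₂` translates the fibre over `i ≠ 1`.
The subtraction takes place in the ring, so that the value at `1` is `-1`. -/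
def offset (R : Type*) [CommRing R] {n : ℕ} (i : ZMod n) : R := altSign R i * (2 * zrep i - 3)

theorem altSign_zero (hn : Odd n) : altSign R (0 : ZMod n) = 1 := by
  rw [altSign, zrep_zero, (Nat.Odd.sub_odd hn odd_one).neg_one_pow]

theorem fibreTranslation_offset_pow (hR : (n : R) = 0) :
    fibreTranslation (offset R (n := n)) ^ n = 1 := by
  rw [← fibreTranslation_nsmul, ← Nat.cast_smul_eq_nsmul R, hR, zero_smul, fibreTranslation_zero]

variable [NeZero n]

theorem altSign_one : altSign R (1 : ZMod n) = 1 := by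
  simp [altSign, zrep_one]

theorem altSign_add_one {i : ZMod n} (hi : i ≠ 0) : altSign R (i + 1) = -altSign R i := by
  rw [altSign, altSign, zrep_add_one hi, Nat.sub_add_comm (zrep_pos i), pow_succ, mul_neg_one]

theorem altSign_two_sub (hn : Odd n) {i : ZMod n} (hi : i ≠ 1) :
    altSign R (2 - i) = -altSign R i := by
  have hle := zrep_le i
  have hlt := one_lt_zrep hi
  have hexp : Odd (zrep (2 - i) - 1 + (zrep i - 1)) := by
    rwa [zrep_two_sub hi, show n + 2 - zrep i - 1 + (zrep i - 1) = n by omega]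
  have hprod : altSign R (2 - i) * altSign R i = -1 := by
    rw [altSign, altSign, ← pow_add, hexp.neg_one_pow]
  have hsq : altSign R i * altSign R i = 1 := by
    rw [altSign, ← mul_pow, neg_one_mul, neg_neg, one_pow]
  rw [← mul_one (altSign R (2 - i)), ← hsq, ← mul_assoc, hprod, neg_one_mul]

theorem offset_one : offset R (1 : ZMod n) = -1 := by
  rw [offset, altSign_one, zrep_one]
  norm_num

theorem offset_eq_mul_natCast {i : ZMod n} (hi : i ≠ 1) :
    offset R i = (-1) ^ (zrep i - 1) * ((2 * zrep i - 3 : ℕ) : R) := by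
  have hlt := one_lt_zrep hi
  rw [offset, altSign, Nat.cast_sub (by omega)]
  push_cast
  rfl

theorem shearedReflection_offset_sq (hn : Odd n) (hR : (n : R) = 0) :
    shearedReflection (offset R (n := n)) ^ 2 =
      fibreTranslation fun i => 4 * altSign R i * (zrep i - 1) := by
  refine shearedReflection_sq (by simp [zrep_one]) fun i hi => ?_
  have hle := zrep_le i
  rw [offset, offset, altSign_two_sub hn hi, zrep_two_sub hi, Nat.cast_sub (by omega),
    Nat.cast_add, hR]
  push_cast
  ring

theorem twistedRotation_mul_shearedReflection_offset_sq (hn : Odd n) (hR : (n : R) = 0) :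
    twistedRotation (ZMod n) R * shearedReflection (offset R) ^ 2 =
      fibreTranslation (fun i => -(4 * altSign R i * (zrep i - 2))) *
        twistedRotation (ZMod n) R := by
  rw [shearedReflection_offset_sq hn hR]
  refine twistedRotation_mul_fibreTranslation ?_ fun i hi => ?_
  · rw [altSign_one, altSign_zero hn, zrep_one, zrep_zero, hR]
    norm_num
  · rw [altSign_add_one hi, zrep_add_one hi]
    push_cast
    ring

theorem fibreTranslation_offset_pow_four (hn : Odd n) (hR : (n : R) = 0) :
    fibreTranslation (offset R (n := n)) ^ 4 =
      shearedReflection (offset R) ^ 2 *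
        (twistedRotation (ZMod n) R * shearedReflection (offset R) ^ 2 *
          (twistedRotation (ZMod n) R)⁻¹)⁻¹ := by
  rw [twistedRotation_mul_shearedReflection_offset_sq hn hR, mul_inv_cancel_right,
    eq_mul_inv_iff_mul_eq, shearedReflection_offset_sq hn hR, ← fibreTranslation_nsmul,
    ← fibreTranslation_add]
  congr 1
  ext i
  rw [Pi.add_apply, Pi.smul_apply, nsmul_eq_mul, offset, Nat.cast_ofNat]
  ring

theorem fibreTranslation_offset_mem_closure (hn : Odd n) (hR : (n : R) = 0) :
    fibreTranslation (offset R) ∈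
      Subgroup.closure {twistedRotation (ZMod n) R, shearedReflection (offset R)} := by
  set G := Subgroup.closure {twistedRotation (ZMod n) R, shearedReflection (offset R)}
  have hσ₁ : twistedRotation (ZMod n) R ∈ G := Subgroup.subset_closure (by simp)
  have hσ₂ : shearedReflection (offset R) ∈ G := Subgroup.subset_closure (by simp)
  have hcoprime : Nat.Coprime 4 n := (Nat.coprime_two_left.mpr hn).pow_left 2
  refine mem_of_pow_mem_of_coprime hcoprime ?_ ?_
  · rw [fibreTranslation_offset_pow_four hn hR]
    exact mul_mem (pow_mem hσ₂ 2)
      (inv_mem (mul_mem (mul_mem hσ₁ (pow_mem hσ₂ 2)) (inv_mem hσ₁)))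
  · rw [fibreTranslation_offset_pow hR]
    exact one_mem G

theorem twistedReflection_mem_closure (hn : Odd n) (hR : (n : R) = 0) :
    twistedReflection (ZMod n) R ∈
      Subgroup.closure {twistedRotation (ZMod n) R, shearedReflection (offset R)} := by
  have factorization : twistedReflection (ZMod n) R * shearedReflection (offset R) =
      twistedRotation (ZMod n) R ^ n * fibreTranslation (offset R) := by
    rw [twistedReflection_mul_shearedReflection offset_one, twistedRotation_pow_self,
      fibreReflection_mul_fibreTranslation]
  rw [eq_mul_inv_of_mul_eq factorization]
  exact mul_mem
    (mul_mem (pow_mem (Subgroup.subset_closure (by simp)) n)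
      (fibreTranslation_offset_mem_closure hn hR))
    (inv_mem (Subgroup.subset_closure (by simp)))

end Offset

theorem statement10
    (m s n : ℕ) (hm : 3 ≤ m) (hmo : Odd m) (hs : 0 < s) (hso : Odd s) (hn : n = s * m)
    (σ₁ σ₂ ρ : Equiv.Perm (ZMod n × ZMod m))
    (hσ₁ : ∀ (i : ZMod n) (j : ZMod m),
      σ₁ (i, j) = if i = 0 then (i + 1, 1 - j) else (i + 1, j))
    (hσ₂ : ∀ (i : ZMod n) (j : ZMod m),
      σ₂ (i, j) = if i = 1 then (2 - i, 2 - j)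
        else (2 - i, j + (-1 : ZMod m) ^ (zrep i - 1) * ((2 * zrep i - 3 : ℕ) : ZMod m)))
    (hρ : ∀ (i : ZMod n) (j : ZMod m),
      ρ (i, j) = if i = 1 then (2 - i, j) else (2 - i, 1 - j))
    :
    (∀ u v : ZMod n × ZMod m, (lexCycle n m).Adj (ρ u) (ρ v) ↔ (lexCycle n m).Adj u v) ∧
      ρ * ρ = 1 ∧ ρ ∈ Subgroup.closure {σ₁, σ₂} ∧
      ρ ((1, 1) : ZMod n × ZMod m) = (1, 1) ∧
      ρ * σ₁ * ρ = σ₁⁻¹ ∧ ρ * σ₂ * ρ = σ₂⁻¹ := by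
  have hodd : Odd n := hn ▸ hso.mul hmo
  have : NeZero n := ⟨hodd.pos.ne'⟩
  have hcast : (n : ZMod m) = 0 := by simp [hn]
  obtain rfl : σ₁ = twistedRotation (ZMod n) (ZMod m) := by
    ext1 ⟨i, j⟩
    rw [hσ₁, twistedRotation_apply]
  obtain rfl : σ₂ = shearedReflection (offset (ZMod m)) := by
    ext1 ⟨i, j⟩
    rw [hσ₂, shearedReflection_apply]
    split_ifs with hi
    exacts [rfl, by rw [offset_eq_mul_natCast hi]]
  obtain rfl : ρ = twistedReflection (ZMod n) (ZMod m) := by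
    ext1 ⟨i, j⟩
    rw [hρ, twistedReflection_apply]
  exact ⟨lexCycle_adj_apply_iff fun _ => rfl, twistedReflection_mul_self,
    twistedReflection_mem_closure hodd hcast, twistedReflection_apply_one 1,
    twistedReflection_mul_twistedRotation_mul_twistedReflection,
    twistedReflection_mul_shearedReflection_mul_twistedReflection offset_one⟩
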